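/- Let G=(V,E) be a multigraph without self-loops and let s ∈ V. For every basic s-cycle packing f of G and every s-cycle cover x of G, the size of f is at most the size of x, i.e., (1/2)·Σ_{e incident to s} f(e) ≤ Σ_{v∈V} x(v). -/

import Mathlib

/-- A multigraph on vertex type `V` with edge type `E`: each edge has an
unordered pair of endpoints.  Parallel edges are distinguished (they are
different elements of `E`), and self-loops are edges whose endpoint pair is
diagonal. -/
structure Multigraph (V : Type) (E : Type) where
  ends : E → Sym2 V

namespace Multigraph

variable {V E : Type}

/-- A multigraph has no self-loops. -/
def LoopFree (G : Multigraph V E) : Prop := ∀ e : E, ¬ (G.ends e).IsDiag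

/-- The degree of a vertex: the number of incident edges (parallel edges
counted with multiplicity). -/
noncomputable def degree (G : Multigraph V E) (v : V) : ℕ :=
  Nat.card {e : E // v ∈ G.ends e}

/-- A walk `(v₀, e₁, v₁, …, e_l, v_l)` of positive length `l ≥ 1` in which
each edge `eᵢ` joins `v_{i-1}` and `vᵢ`. -/
structure Walk (G : Multigraph V E) where
  len : ℕ
  len_pos : 0 < len
  verts : Fin (len + 1) → V
  edges : Fin len → E
  valid : ∀ i : Fin len, G.ends (edges i) = s(verts i.castSucc, verts i.succ)

namespace Walk

variable {G : Multigraph V E}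

/-- The first vertex of a walk. -/
def start (W : G.Walk) : V := W.verts 0

/-- The last vertex of a walk. -/
def finish (W : G.Walk) : V := W.verts (Fin.last W.len)

/-- A cycle: a closed walk of positive length with pairwise distinct edges and
pairwise distinct vertices (except that the first and last vertex coincide). -/
def IsCycle (W : G.Walk) : Prop :=
  W.start = W.finish ∧ Function.Injective W.edges ∧
    Function.Injective fun i : Fin W.len => W.verts i.castSucc

/-- An `s`-cycle: a walk with `v₀ = v_l = s`, with `vᵢ ≠ s` for `0 < i < l`,
with no U-turns (`eᵢ ≠ e_{i+1}`), and in which every edge occurs at most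
twice. -/
def IsSCycle (W : G.Walk) (s : V) : Prop :=
  W.start = s ∧ W.finish = s ∧
  (∀ i : Fin (W.len + 1), i ≠ 0 → i ≠ Fin.last W.len → W.verts i ≠ s) ∧
  (∀ i j : Fin W.len, (i : ℕ) + 1 = (j : ℕ) → W.edges i ≠ W.edges j) ∧
  (∀ e : E, Nat.card {i : Fin W.len // W.edges i = e} ≤ 2)

/-- The multiplicity of a vertex `v` in the multiset `V(W)` of vertices of a
walk `W`. -/
noncomputable def vertCount (W : G.Walk) (v : V) : ℕ :=
  Nat.card {i : Fin (W.len + 1) // W.verts i = v}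

end Walk

/-- `S` is a feedback vertex set: every cycle of `G` meets `S`
(equivalently, `G − S` contains no cycle). -/
def IsFVS (G : Multigraph V E) (S : Set V) : Prop :=
  ∀ W : G.Walk, W.IsCycle → ∃ i, W.verts i ∈ S

/-- The minimum size of a feedback vertex set. -/
noncomputable def fvs [Fintype V] (G : Multigraph V E) : ℕ :=
  sInf {n : ℕ | ∃ S : Set V, G.IsFVS S ∧ S.ncard = n}

/-- `x : V → ℝ≥0` is an `s`-cycle cover: `x s = 0` and every `s`-cycle `C`
satisfies `x(V(C)) ≥ 1` (vertices counted with multiplicity). -/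
def IsSCycleCover (G : Multigraph V E) (s : V) (x : V → ℝ) : Prop :=
  (∀ v, 0 ≤ x v) ∧ x s = 0 ∧
    ∀ W : G.Walk, W.IsSCycle s → 1 ≤ ∑ i, x (W.verts i)

/-- A function is half-integral if it takes values in `{0, 1/2, 1}`. -/
def HalfIntegral (x : V → ℝ) : Prop := ∀ v, x v = 0 ∨ x v = 1/2 ∨ x v = 1

/-- A minimum `s`-cycle cover. -/
def IsMinSCycleCover [Fintype V] (G : Multigraph V E) (s : V) (x : V → ℝ) : Prop :=
  G.IsSCycleCover s x ∧ ∀ x' : V → ℝ, G.IsSCycleCover s x' → ∑ v, x v ≤ ∑ v, x' v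

/-- An `s`-cycle packing: a nonnegative, finitely supported weighting of the
`s`-cycles such that every vertex `v ≠ s` is used (with multiplicity) with
total weight at most `1`. -/
def IsSCyclePacking (G : Multigraph V E) (s : V) (y : G.Walk →₀ ℝ) : Prop :=
  (∀ W, 0 ≤ y W) ∧ (∀ W, y W ≠ 0 → W.IsSCycle s) ∧
    ∀ v : V, v ≠ s → ∑ W ∈ y.support, (W.vertCount v : ℝ) * y W ≤ 1

/-- The size of an `s`-cycle packing. -/
noncomputable def packingSize {G : Multigraph V E} (y : G.Walk →₀ ℝ) : ℝ :=
  ∑ W ∈ y.support, y W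

/-- Number of edges incident to `v` with `f`-value 1. -/
noncomputable def cnt1 (G : Multigraph V E) (f : E → ℝ) (v : V) : ℕ :=
  Nat.card {e : E // v ∈ G.ends e ∧ f e = 1}

/-- Number of edges incident to `v` with `f`-value 1/2. -/
noncomputable def cntH (G : Multigraph V E) (f : E → ℝ) (v : V) : ℕ :=
  Nat.card {e : E // v ∈ G.ends e ∧ f e = 1/2}

/-- type-O: all incident edges have `f`-value 0. -/
def IsTypeO (G : Multigraph V E) (f : E → ℝ) (v : V) : Prop :=
  ∀ e : E, v ∈ G.ends e → f e = 0

/-- type-I: exactly two incident edges have value 1 and none has value 1/2. -/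
def IsTypeI (G : Multigraph V E) (f : E → ℝ) (v : V) : Prop :=
  G.cnt1 f v = 2 ∧ G.cntH f v = 0

/-- type-H: no incident edge has value 1 and exactly two have value 1/2. -/
def IsTypeH (G : Multigraph V E) (f : E → ℝ) (v : V) : Prop :=
  G.cnt1 f v = 0 ∧ G.cntH f v = 2

/-- type-T: exactly one incident edge has value 1 and exactly two have value 1/2. -/
def IsTypeT (G : Multigraph V E) (f : E → ℝ) (v : V) : Prop :=
  G.cnt1 f v = 1 ∧ G.cntH f v = 2

/-- A basic `s`-cycle packing: `f : E → {0,1/2,1}` with `f(e) ∈ {0,1}` on edges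
incident to `s`, every vertex `v ≠ s` of one of the four types O, I, H, T, and
every cycle consisting of edges of value 1/2 (i.e. every half-integral cycle)
containing an odd number of type-T vertices. -/
def IsBasicSCyclePacking (G : Multigraph V E) (s : V) (f : E → ℝ) : Prop :=
  (∀ e : E, f e = 0 ∨ f e = 1/2 ∨ f e = 1) ∧
  (∀ e : E, s ∈ G.ends e → f e = 0 ∨ f e = 1) ∧
  (∀ v : V, v ≠ s →
    G.IsTypeO f v ∨ G.IsTypeI f v ∨ G.IsTypeH f v ∨ G.IsTypeT f v) ∧
  (∀ W : G.Walk, W.IsCycle → (∀ j, f (W.edges j) = 1/2) →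
    Odd (Nat.card {i : Fin W.len // G.IsTypeT f (W.verts i.castSucc)}))

/-- The size of a basic `s`-cycle packing: `(1/2) · Σ_{e ∈ δ(s)} f(e)`. -/
noncomputable def basicSize [Fintype E] (G : Multigraph V E) (s : V) (f : E → ℝ) : ℝ :=
  (1/2) * ∑ e : E, Set.indicator {e' : E | s ∈ G.ends e'} f e

/-- `u` and `v` are connected by a walk avoiding the vertex set `S` and the
edge set `F` (or `u = v`). -/
def Reach (G : Multigraph V E) (S : Set V) (F : Set E) (u v : V) : Prop :=
  u = v ∨ ∃ W : G.Walk, (∀ i, W.verts i ∉ S) ∧ (∀ j, W.edges j ∉ F) ∧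
    W.start = u ∧ W.finish = v

/-- The edge `e` belongs to the set `B` of the `s`-cycle cover reduction with
respect to the set `X`: `e` joins `s` to some `u ∉ X`, `e` is a bridge of
`G − X` (its endpoints are disconnected in `G − X − e`), and the connected
component of `u` in `G − X − s` is a tree (no cycle of `G − X − s` passes
through a vertex reachable from `u` in `G − X − s`). -/
def InB (G : Multigraph V E) (s : V) (X : Set V) (e : E) : Prop :=
  ∃ u : V, G.ends e = s(s, u) ∧ u ≠ s ∧ u ∉ X ∧ s ∉ X ∧
    ¬ G.Reach X {e} s u ∧
    ¬ ∃ W : G.Walk, W.IsCycle ∧ (∀ i, W.verts i ∉ X ∪ {s}) ∧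
        G.Reach (X ∪ {s}) ∅ u W.start

/-- The graph `G' = (V, E')` obtained from `G` by the `s`-cycle cover
reduction with respect to a half-integral `s`-cycle cover `x`: with
`X = x⁻¹(1)`, insert a double edge (two new parallel edges) between `s` and
each `v ∈ X`, and delete the edges of `B`. -/
def reduced (G : Multigraph V E) (s : V) (x : V → ℝ) :
    Multigraph V ({e : E // ¬ G.InB s {v : V | x v = 1} e} ⊕ ({v : V // x v = 1} × Bool)) where
  ends := fun e =>
    match e with
    | .inl e' => G.ends e'.val
    | .inr p => s(s, p.1.val)

/-- The graph `G − s` obtained by deleting the vertex `s` and all incident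
edges (the vertex `s` is kept as an isolated vertex). -/
def deleteVertex (G : Multigraph V E) (s : V) :
    Multigraph V {e : E // s ∉ G.ends e} where
  ends := fun e => G.ends e.val

/-- An `f`-augmenting walk for a basic `s`-cycle packing `f`:
(1) it starts at `s`; (2) its first edge has value 0; (3) its edges are
pairwise distinct; (4) its vertices `v₀,…,v_{l-1}` are pairwise distinct;
(5) each interior vertex `vᵢ` (`1 ≤ i ≤ l-1`) is type-O, or type-I with
`f(e) = 1` for at least one of `e ∈ {eᵢ, e_{i+1}}`; (6) if the last vertex
`v_l` equals `vᵢ` for some `i < l` then: `v_l = s` and `f(e_l) = 0`, or `v_l`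
is type-O, or `v_l` is type-I and `f(e) = 1` for at least one of
`e ∈ {eᵢ, e_l}`; (7) if `v_l` is a new vertex then it is type-H or type-T. -/
def IsAugmentingWalk (G : Multigraph V E) (s : V) (f : E → ℝ) (W : G.Walk) : Prop :=
  W.start = s ∧
  f (W.edges ⟨0, W.len_pos⟩) = 0 ∧
  Function.Injective W.edges ∧
  Function.Injective (fun i : Fin W.len => W.verts i.castSucc) ∧
  (∀ i : Fin W.len, 0 < i.val →
    (G.IsTypeO f (W.verts i.castSucc) ∨
      (G.IsTypeI f (W.verts i.castSucc) ∧
        (f (W.edges ⟨i.val - 1, Nat.lt_of_le_of_lt (Nat.sub_le _ _) i.isLt⟩) = 1 ∨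
          f (W.edges i) = 1)))) ∧
  (∀ i : Fin W.len, W.finish = W.verts i.castSucc →
    ((W.finish = s ∧ f (W.edges ⟨W.len - 1, Nat.sub_lt W.len_pos Nat.one_pos⟩) = 0) ∨
     (W.finish ≠ s ∧ G.IsTypeO f W.finish) ∨
     (W.finish ≠ s ∧ G.IsTypeI f W.finish ∧
       (f (W.edges ⟨i.val - 1, Nat.lt_of_le_of_lt (Nat.sub_le _ _) i.isLt⟩) = 1 ∨
         f (W.edges ⟨W.len - 1, Nat.sub_lt W.len_pos Nat.one_pos⟩) = 1)))) ∧
  ((∀ i : Fin W.len, W.finish ≠ W.verts i.castSucc) →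
    (G.IsTypeH f W.finish ∨ G.IsTypeT f W.finish))

/-- `g = f_W` is obtained from `f` by augmenting along the walk `W`.
If `v_l = s` (so `h = l`), the values of `f` on `e₁,…,e_l` are flipped
(`f ↦ 1 − f`).  If `v_l ≠ s` equals an earlier vertex `vᵢ` (so `h = i`), the
values on `e₁,…,e_h` are flipped and the values on `e_{h+1},…,e_l` are set to
`1/2`.  If `v_l ≠ s` is a new vertex (type-H or type-T, with `h = l`), the
values on `e₁,…,e_l` are flipped and, on the half-integral cycle `C` of `v_l`
(traversed from `t₀ = v_l` in either direction), the edges of the segment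
`Pᵢ` between consecutive markers `tᵢ, t_{i+1}` (the markers being `v_l`
together with the type-T vertices of `C`) receive value `0` for even `i` and
`1` for odd `i`; the segment index of an edge is the number of type-T
vertices strictly preceding it along the traversal.  All other edges keep
their `f`-value. -/
def AugmentedAlong (G : Multigraph V E) (s : V) (f : E → ℝ) (W : G.Walk) (g : E → ℝ) : Prop :=
  -- Case A : the walk returns to `s`.
  (W.finish = s ∧
    (∀ j : Fin W.len, g (W.edges j) = 1 - f (W.edges j)) ∧
    (∀ e : E, (∀ j, e ≠ W.edges j) → g e = f e)) ∨
  -- Case B : the last vertex is a repeated vertex `vᵢ ≠ s` (type-O or type-I).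
  (W.finish ≠ s ∧
    (∃ i : Fin W.len, W.finish = W.verts i.castSucc ∧
      (∀ j : Fin W.len, j.val < i.val → g (W.edges j) = 1 - f (W.edges j)) ∧
      (∀ j : Fin W.len, i.val ≤ j.val → g (W.edges j) = 1/2) ∧
      (∀ e : E, (∀ j, e ≠ W.edges j) → g e = f e))) ∨
  -- Case C : the last vertex is a new vertex of type-H or type-T.
  (W.finish ≠ s ∧ (∀ i : Fin W.len, W.finish ≠ W.verts i.castSucc) ∧
    (∃ C : G.Walk, C.IsCycle ∧ C.verts 0 = W.finish ∧
      (∀ j, f (C.edges j) = 1/2) ∧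
      (∀ j : Fin W.len, g (W.edges j) = 1 - f (W.edges j)) ∧
      (∀ j : Fin C.len,
        g (C.edges j) =
          if Even (Nat.card {m : Fin C.len //
              1 ≤ m.val ∧ m.val ≤ j.val ∧ G.IsTypeT f (C.verts m.castSucc)})
          then 0 else 1) ∧
      (∀ e : E, (∀ j, e ≠ W.edges j) → (∀ j, e ≠ C.edges j) → g e = f e)))


end Multigraph

/-!
The edges of value `1 / 2` form disjoint cycles, so they have an Eulerian orientation.  Traverse
them along it, and traverse the edges of value `1` in both directions.  Every vertex other than `s`
is then entered and left equally often, at most twice, and a permutation of these darts can continue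
every dart through its head without a U-turn away from `s`: a dart whose reversal is also present
has value `1`, and at a vertex with an edge of value `1` there are two ways to leave.

Following the permutation from a dart leaving `s` until the first return to `s` gives an `s`-cycle.
Distinct such excursions use distinct darts, so the number of edges of value `1` at `s` is at most
the sum of `x` over the tails of all darts, which is at most `2 * ∑ v, x v`.
-/

section Permutations

open Function

variable {α β γ ι : Type*}

theorem exists_equiv_forall_ne [Finite α] [Nontrivial α] {f : α → γ} {g : β → γ}
    (hf : Injective f) (hg : Injective g) (e : α ≃ β) : ∃ φ : α ≃ β, ∀ a, g (φ a) ≠ f a := by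
  classical
  have : Finite β := .of_equiv α e
  have : Nonempty (α ≃ β) := ⟨e⟩
  -- Where a bijection minimizing the number of coincidences had one, a swap would remove it.
  obtain ⟨φ, hφ⟩ := Finite.exists_min fun φ : α ≃ β => {a | g (φ a) = f a}.ncard
  refine ⟨φ, fun a ha => ?_⟩
  obtain ⟨b, hba⟩ := exists_ne a
  refine (hφ ((Equiv.swap a b).trans φ)).not_gt (Set.ncard_lt_ncard ⟨fun c hc => ?_, fun h => ?_⟩)
  · have hca : c ≠ a := by
      rintro rfl
      exact hba (φ.injective (hg (by simpa [ha] using hc)))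
    have hcb : c ≠ b := by
      rintro rfl
      exact hba (hf (by simpa [ha] using hc.symm))
    simpa [Equiv.swap_apply_of_ne_of_ne hca hcb] using hc
  · exact hba (φ.injective (hg (by simpa [ha] using h ha)))

/-- The permutation that glues together bijections from the fibers of `h` to those of `t`. -/
def fiberPerm {t h : α → ι} (φ : ∀ i, {a // h a = i} ≃ {a // t a = i}) : Equiv.Perm α :=
  (Equiv.sigmaFiberEquiv h).symm.trans
    ((Equiv.sigmaCongrRight φ).trans (Equiv.sigmaFiberEquiv t))

theorem fiberPerm_apply {t h : α → ι} (φ : ∀ i, {a // h a = i} ≃ {a // t a = i}) {i : ι} {a : α}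
    (ha : h a = i) : fiberPerm φ a = φ i ⟨a, ha⟩ := by
  subst ha
  rfl

theorem exists_involutive_perm_forall_ne [Finite α] (hα : Even (Nat.card α)) :
    ∃ ρ : Equiv.Perm α, Involutive ρ ∧ ∀ a, ρ a ≠ a := by
  obtain ⟨n, hn⟩ := hα
  let e : α ≃ Fin (n + n) := Finite.equivFinOfCardEq hn
  refine ⟨e.symm.permCongr Fin.revPerm, fun a => by simp, fun a ha => ?_⟩
  have hrev : (e a).rev = e a := by simpa [Equiv.symm_apply_eq] using ha
  have := congr_arg Fin.val hrev
  rw [Fin.val_rev] at this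
  omega

theorem exists_involutive_perm_forall_ne_of_even_fibers [Finite α] (t : α → ι)
    (ht : ∀ i, Even (Nat.card {a // t a = i})) :
    ∃ ρ : Equiv.Perm α, Involutive ρ ∧ (∀ a, ρ a ≠ a) ∧ ∀ a, t (ρ a) = t a := by
  choose φ hφ hne using fun i => exists_involutive_perm_forall_ne (ht i)
  have happly : ∀ a, fiberPerm φ a = φ (t a) ⟨a, rfl⟩ := fun a => fiberPerm_apply φ rfl
  have ht : ∀ a, t (fiberPerm φ a) = t a := fun a => by
    rw [happly]
    exact (φ (t a) ⟨a, rfl⟩).2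
  refine ⟨fiberPerm φ, fun a => ?_, fun a h => hne (t a) ⟨a, rfl⟩ (Subtype.ext ?_), ht⟩
  · rw [fiberPerm_apply φ (ht a)]
    simp only [happly, Subtype.coe_eta, hφ (t a) ⟨a, rfl⟩]
  · rw [← happly, h]

/- Conjugation by `r` inverts `ρ * r`, so if `r` preserved a cycle of `ρ * r`, it would reflect it,
and either `r` or `ρ` would have a fixed point on the cycle, by the parity of the shift. -/
theorem not_sameCycle_mul_of_involutive {r ρ : Equiv.Perm α} (hr : Involutive r)
    (hρ : Involutive ρ) (hr_ne : ∀ a, r a ≠ a) (hρ_ne : ∀ a, ρ a ≠ a) (a : α) :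
    ¬ (ρ * r).SameCycle a (r a) := by
  have hrr : r⁻¹ = r := Equiv.ext fun a => by rw [Equiv.Perm.inv_eq_iff_eq, hr a]
  have hρρ : ρ⁻¹ = ρ := Equiv.ext fun a => by rw [Equiv.Perm.inv_eq_iff_eq, hρ a]
  have hconj (m : ℤ) : r * (ρ * r) ^ m = (ρ * r) ^ (-m) * r := by
    have h : SemiconjBy r (ρ * r) (ρ * r)⁻¹ := by
      rw [SemiconjBy, mul_inv_rev, hrr, hρρ, mul_assoc]
    rw [zpow_neg, ← inv_zpow]
    exact (h.zpow_right m).eq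
  rintro ⟨k, hk⟩
  have hreflect (m : ℤ) : r (((ρ * r) ^ m) a) = ((ρ * r) ^ (k - m)) a := by
    rw [← Equiv.Perm.mul_apply, hconj, Equiv.Perm.mul_apply, ← hk, ← Equiv.Perm.mul_apply,
      ← zpow_add, neg_add_eq_sub]
  obtain ⟨m, rfl | rfl⟩ := Int.even_or_odd' k
  · exact hr_ne (((ρ * r) ^ m) a) (by rw [hreflect, two_mul, add_sub_cancel_right])
  · refine hρ_ne (r (((ρ * r) ^ m) a)) ?_
    rw [← Equiv.Perm.mul_apply, ← Equiv.Perm.mul_apply, ← zpow_one_add, hreflect]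
    congr 2
    ring

theorem exists_set_alternating {r ρ : Equiv.Perm α} (hr : Involutive r) (hρ : Involutive ρ)
    (hr_ne : ∀ a, r a ≠ a) (hρ_ne : ∀ a, ρ a ≠ a) :
    ∃ O : Set α, (∀ a, r a ∈ O ↔ a ∉ O) ∧ ∀ a, ρ a ∈ O ↔ a ∉ O := by
  -- Both `r` and `ρ` swap the orbits of `a` and `r a` under `ρ * r`; keep the smaller of the two.
  let orbit : α → Quotient (Equiv.Perm.SameCycle.setoid (ρ * r)) := Quotient.mk _
  let _ : LinearOrder (Quotient (Equiv.Perm.SameCycle.setoid (ρ * r))) :=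
    IsWellOrder.linearOrder WellOrderingRel
  have horbit (a : α) : orbit (ρ (r a)) = orbit a :=
    Quotient.sound (Equiv.Perm.SameCycle.refl _ a).apply_left
  have hne (a : α) : orbit a ≠ orbit (r a) := fun h =>
    not_sameCycle_mul_of_involutive hr hρ hr_ne hρ_ne a (Quotient.exact h)
  have hρ_orbit (a : α) : orbit (ρ a) = orbit (r a) := by rw [← horbit (r a), hr a]
  have hrρ_orbit (a : α) : orbit (r (ρ a)) = orbit a := by rw [← horbit (r (ρ a)), hr, hρ]
  refine ⟨{a | orbit a < orbit (r a)}, fun a => ?_, fun a => ?_⟩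
  · rw [Set.mem_ofPred_eq, Set.mem_ofPred_eq, hr, not_lt, (hne a).symm.le_iff_lt]
  · rw [Set.mem_ofPred_eq, Set.mem_ofPred_eq, hρ_orbit, hrρ_orbit, not_lt, (hne a).symm.le_iff_lt]

end Permutations

section Excursions

open Function

variable {α : Type*}

/-- The first positive time at which the orbit of `a` under `π` is in `Z`, or `0` if there is
none. -/
noncomputable def returnTime (π : α → α) (Z : Set α) (a : α) : ℕ :=
  sInf {n | 0 < n ∧ π^[n] a ∈ Z}

variable {π : α → α} {Z : Set α} {a b : α}

theorem iterate_notMem_of_lt_returnTime {n : ℕ} (hn : 0 < n) (h : n < returnTime π Z a) :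
    π^[n] a ∉ Z := fun hZ => Nat.notMem_of_lt_sInf h ⟨hn, hZ⟩

theorem iterate_returnTime_mem (h : 0 < returnTime π Z a) : π^[returnTime π Z a] a ∈ Z :=
  (Nat.sInf_mem (Nat.nonempty_of_pos_sInf h)).2

theorem returnTime_pos (hπ : a ∈ periodicPts π) (ha : a ∈ Z) : 0 < returnTime π Z a := by
  obtain ⟨n, hn, hper⟩ := hπ
  exact (Nat.sInf_mem (s := {n | 0 < n ∧ π^[n] a ∈ Z}) ⟨n, hn, hper.symm ▸ ha⟩).1

theorem eq_of_iterate_eq_of_lt_returnTime (hπ : Injective π) {i j : ℕ} (ha : a ∈ Z) (hb : b ∈ Z)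
    (hi : i < returnTime π Z a) (hj : j < returnTime π Z b) (h : π^[i] a = π^[j] b) :
    a = b ∧ i = j := by
  wlog hij : i ≤ j generalizing a b i j
  · exact (this hb ha hj hi h.symm (le_of_not_ge hij)).imp Eq.symm Eq.symm
  obtain ⟨k, rfl⟩ := Nat.exists_eq_add_of_le hij
  rw [iterate_add_apply] at h
  obtain rfl : a = π^[k] b := hπ.iterate i h
  obtain rfl | hk := k.eq_zero_or_pos
  · exact ⟨rfl, rfl⟩
  · exact absurd ha (iterate_notMem_of_lt_returnTime hk (by omega))

theorem sum_sum_range_returnTime_le {M : Type*} [AddCommMonoid M] [PartialOrder M]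
    [IsOrderedAddMonoid M] [Fintype α] (hπ : Injective π) (Z : Finset α) {y : α → M} (hy : 0 ≤ y) :
    ∑ a ∈ Z, ∑ i ∈ Finset.range (returnTime π Z a), y (π^[i] a) ≤ ∑ a, y a := by
  classical
  rw [Finset.sum_sigma']
  have hinj : Set.InjOn (fun p : (_ : α) × ℕ => π^[p.2] p.1)
      (Z.sigma fun a => Finset.range (returnTime π Z a)) := by
    rintro ⟨a, i⟩ hai ⟨b, j⟩ hbj h
    simp only [Finset.coe_sigma, Set.mem_sigma_iff, Finset.mem_coe, Finset.mem_range] at hai hbj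
    obtain ⟨rfl, rfl⟩ := eq_of_iterate_eq_of_lt_returnTime hπ hai.1 hbj.1 hai.2 hbj.2 h
    rfl
  rw [← Finset.sum_image (f := y) hinj]
  exact Finset.sum_le_sum_of_subset_of_nonneg (Finset.subset_univ _) fun a _ _ => hy a

end Excursions

theorem sum_comp_le_mul_sum {α ι R : Type*} [Semiring R] [PartialOrder R] [IsOrderedRing R]
    [Fintype α] [Fintype ι] {t : α → ι} {x : ι → R} (hx : 0 ≤ x) {k : ℕ}
    (ht : ∀ i, x i ≠ 0 → Nat.card {a // t a = i} ≤ k) :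
    ∑ a, x (t a) ≤ k * ∑ i, x i := by
  classical
  rw [← Finset.sum_fiberwise (g := t), Finset.mul_sum]
  refine Finset.sum_le_sum fun i _ => ?_
  rw [Finset.sum_congr rfl fun a ha => by rw [(Finset.mem_filter.1 ha).2], Finset.sum_const,
    nsmul_eq_mul, ← Fintype.card_subtype, ← Nat.card_eq_fintype_card]
  obtain hi | hi := eq_or_ne (x i) 0
  · simp [hi]
  · exact mul_le_mul_of_nonneg_right (Nat.mono_cast (ht i hi)) (hx i)

namespace Multigraph

variable {V E : Type} {G : Multigraph V E}

/-- An edge together with a direction of traversal.  A self-loop carries only one dart. -/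
@[ext]
structure Dart (G : Multigraph V E) where
  edge : E
  tail : V
  head : V
  ends_edge : G.ends edge = s(tail, head)

namespace Dart

/-- The same edge traversed backwards. -/
@[simps]
def rev (d : G.Dart) : G.Dart := ⟨d.edge, d.head, d.tail, d.ends_edge.trans Sym2.eq_swap⟩

theorem rev_involutive : Function.Involutive (rev : G.Dart → G.Dart) := fun _ => rfl

theorem tail_mem_ends (d : G.Dart) : d.tail ∈ G.ends d.edge := by
  rw [d.ends_edge]
  exact Sym2.mem_mk_left _ _

theorem eq_of_edge_eq_of_tail_eq {d d' : G.Dart} (hedge : d.edge = d'.edge)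
    (htail : d.tail = d'.tail) : d = d' := by
  have h := d.ends_edge.symm.trans ((congr_arg G.ends hedge).trans d'.ends_edge)
  rw [htail, Sym2.congr_right] at h
  exact Dart.ext hedge htail h

theorem eq_of_edge_eq_of_head_eq {d d' : G.Dart} (hedge : d.edge = d'.edge)
    (hhead : d.head = d'.head) : d = d' :=
  rev_involutive.injective (eq_of_edge_eq_of_tail_eq hedge hhead)

theorem eq_or_eq_rev_of_edge_eq {d d' : G.Dart} (h : d.edge = d'.edge) : d = d' ∨ d = d'.rev := by
  have htail : d.tail ∈ s(d'.tail, d'.head) := by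
    rw [← d'.ends_edge, ← h]
    exact d.tail_mem_ends
  exact (Sym2.mem_iff.1 htail).imp (eq_of_edge_eq_of_tail_eq h) (eq_of_edge_eq_of_tail_eq h)

theorem exists_of_mem_ends {e : E} {v : V} (h : v ∈ G.ends e) :
    ∃ d : G.Dart, d.edge = e ∧ d.tail = v := by
  obtain ⟨w, hw⟩ := Sym2.mem_iff_exists.1 h
  exact ⟨⟨e, v, w, hw⟩, rfl, rfl⟩

theorem exists_edge_eq (e : E) : ∃ d : G.Dart, d.edge = e := by
  obtain ⟨d, hd, -⟩ := exists_of_mem_ends (Sym2.out_fst_mem (G.ends e))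
  exact ⟨d, hd⟩

theorem preimage_edge_singleton (d : G.Dart) : edge ⁻¹' {d.edge} = {d, d.rev} := by
  ext d'
  refine ⟨eq_or_eq_rev_of_edge_eq, ?_⟩
  rintro (rfl | rfl) <;> rfl

theorem finite_preimage_edge (e : E) : (edge ⁻¹' {e} : Set G.Dart).Finite := by
  obtain ⟨d, rfl⟩ := exists_edge_eq (G := G) e
  rw [preimage_edge_singleton]
  exact Set.toFinite _

theorem ncard_preimage_edge_le_two (e : E) : (edge ⁻¹' {e} : Set G.Dart).ncard ≤ 2 := by
  obtain ⟨d, rfl⟩ := exists_edge_eq (G := G) e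
  rw [preimage_edge_singleton]
  exact (Set.ncard_insert_le _ _).trans_eq (by rw [Set.ncard_singleton])

instance [Finite E] : Finite G.Dart :=
  Set.finite_univ_iff.1 (.of_finite_fibers edge (Set.toFinite _) fun e _ =>
    (finite_preimage_edge e).subset Set.inter_subset_right)

theorem rev_ne_self (hG : G.LoopFree) (d : G.Dart) : d.rev ≠ d := fun h =>
  hG d.edge (by rw [d.ends_edge, Sym2.mk_isDiag_iff]; exact congr_arg head h)

end Dart

theorem card_dart_tail_eq (G : Multigraph V E) (v : V) :
    Nat.card {d : G.Dart // d.tail = v} = G.degree v := by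
  refine Nat.card_congr (.ofBijective
    (fun d => ⟨d.1.edge, by simpa only [d.2] using d.1.tail_mem_ends⟩)
    ⟨fun d d' h => Subtype.ext ?_, fun e => ?_⟩)
  · exact Dart.eq_of_edge_eq_of_tail_eq (congr_arg Subtype.val h) (d.2.trans d'.2.symm)
  · obtain ⟨d, hde, hdv⟩ := Dart.exists_of_mem_ends e.2
    exact ⟨⟨d, hdv⟩, Subtype.ext hde⟩

section Orientation

/-- A choice of a direction for every edge. -/
structure Orientation (G : Multigraph V E) where
  src : E → V
  tgt : E → V
  ends_eq : ∀ e, G.ends e = s(src e, tgt e)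

namespace Orientation

/-- The orientation with all directions switched. -/
@[simps]
def reverse (o : G.Orientation) : G.Orientation :=
  ⟨o.tgt, o.src, fun e => (o.ends_eq e).trans Sym2.eq_swap⟩

/-- Half of the edges at every vertex leave it and half enter it.  As `degree` counts a self-loop
once, this is the usual notion only on graphs without self-loops. -/
def IsEulerian (o : G.Orientation) : Prop :=
  ∀ v, 2 * Nat.card {e // o.src e = v} = G.degree v ∧ 2 * Nat.card {e // o.tgt e = v} = G.degree v

end Orientation

theorem exists_orientation_of_rev_mem_iff (O : Set G.Dart)
    (hO : ∀ d : G.Dart, d.rev ∈ O ↔ d ∉ O) : ∃ o : G.Orientation, ∀ v,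
      Nat.card {e // o.src e = v} = (O ∩ {d | d.tail = v}).ncard ∧
      Nat.card {e // o.tgt e = v} = (O ∩ {d | d.head = v}).ncard := by
  have hexists (e : E) : ∃ d ∈ O, d.edge = e := by
    obtain ⟨d, rfl⟩ := Dart.exists_edge_eq (G := G) e
    by_cases hd : d ∈ O
    exacts [⟨d, hd, rfl⟩, ⟨d.rev, (hO d).2 hd, rfl⟩]
  choose δ hδO hδ using hexists
  have hδ_edge {d : G.Dart} (hd : d ∈ O) : δ d.edge = d :=
    (Dart.eq_or_eq_rev_of_edge_eq (hδ d.edge)).resolve_right fun h =>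
      (hO d).1 (h ▸ hδO d.edge) hd
  have hcard (p : G.Dart → V) (v : V) :
      Nat.card {e // p (δ e) = v} = (O ∩ {d | p d = v}).ncard :=
    Nat.card_congr ⟨fun e => ⟨δ e, hδO e, e.2⟩, fun d => ⟨d.1.edge, (hδ_edge d.2.1).symm ▸ d.2.2⟩,
      fun e => Subtype.ext (hδ e), fun d => Subtype.ext (hδ_edge d.2.1)⟩
  exact ⟨⟨fun e => (δ e).tail, fun e => (δ e).head, fun e => by rw [← (δ e).ends_edge, hδ]⟩,
    fun v => ⟨hcard Dart.tail v, hcard Dart.head v⟩⟩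

theorem exists_isEulerian [Finite E] (hG : G.LoopFree)
    (heven : ∀ v, Even (G.degree v)) : ∃ o : G.Orientation, o.IsEulerian := by
  obtain ⟨ρ, hρ, hρ_ne, hρ_tail⟩ := exists_involutive_perm_forall_ne_of_even_fibers
    (Dart.tail : G.Dart → V) fun v => by
      rw [card_dart_tail_eq]
      exact heven v
  -- `ρ` pairs up the darts leaving each vertex; of each pair, one dart is to be in the orientation.
  obtain ⟨O, hrev, hρO⟩ := exists_set_alternating (r := Dart.rev_involutive.toPerm)
    Dart.rev_involutive hρ (Dart.rev_ne_self hG) hρ_ne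
  obtain ⟨o, ho⟩ := exists_orientation_of_rev_mem_iff O hrev
  refine ⟨o, fun v => ?_⟩
  have hpair : (Oᶜ ∩ {d | d.tail = v}).ncard = (O ∩ {d | d.tail = v}).ncard :=
    Nat.card_congr (ρ.subtypeEquiv fun d => and_congr (hρO d).symm (by simp [hρ_tail]))
  have hreverse : (Oᶜ ∩ {d | d.tail = v}).ncard = (O ∩ {d | d.head = v}).ncard :=
    Nat.card_congr (Dart.rev_involutive.toPerm.subtypeEquiv fun d => and_congr (hrev d).symm .rfl)
  have hdegree : (O ∩ {d | d.tail = v}).ncard + (Oᶜ ∩ {d | d.tail = v}).ncard = G.degree v := by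
    rw [← card_dart_tail_eq, Set.inter_comm O, Set.inter_comm Oᶜ, ← Set.sdiff_eq]
    exact Set.ncard_inter_add_ncard_sdiff_eq_ncard _ O
  rw [(ho v).1, (ho v).2]
  omega

end Orientation

section Routing

open Function

/-- A permutation of a set `D` of darts in which every dart is followed by one leaving its head,
with no U-turn except at `s`. -/
structure IsRouting (s : V) {D : Set G.Dart} (π : Equiv.Perm D) : Prop where
  tail_apply : ∀ d, (π d).1.tail = d.1.head
  edge_apply_ne : ∀ d, d.1.head ≠ s → (π d).1.edge ≠ d.1.edge

theorem exists_isRouting {s : V} {D : Set G.Dart} [Finite D]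
    (hbal : ∀ v, Nat.card {d : D // d.1.head = v} = Nat.card {d : D // d.1.tail = v})
    (hturn : ∀ d ∈ D, d.rev ∈ D → d.head ≠ s → 2 ≤ Nat.card {d' : D // d'.1.head = d.head}) :
    ∃ π : Equiv.Perm D, IsRouting s π := by
  have hlocal (v : V) : ∃ φ : {d : D // d.1.head = v} ≃ {d : D // d.1.tail = v},
      v ≠ s → ∀ d, (φ d).1.1.edge ≠ d.1.1.edge := by
    obtain ⟨e⟩ := Finite.card_eq.1 (hbal v)
    obtain hsub | hnon := subsingleton_or_nontrivial {d : D // d.1.head = v}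
    · refine ⟨e, fun hv d hd => ?_⟩
      have hrev : (e d).1.1 = d.1.1.rev :=
        Dart.eq_of_edge_eq_of_tail_eq hd ((e d).2.trans d.2.symm)
      have htwo := hturn d.1 d.1.2 (hrev ▸ (e d).1.2) (d.2.symm ▸ hv)
      rw [d.2] at htwo
      exact htwo.not_gt (Nat.lt_succ_of_le (Finite.card_le_one_iff_subsingleton.2 hsub))
    · obtain ⟨φ, hφ⟩ := exists_equiv_forall_ne
        (f := fun d : {d : D // d.1.head = v} => d.1.1.edge)
        (g := fun d : {d : D // d.1.tail = v} => d.1.1.edge)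
        (fun d d' h => Subtype.ext (Subtype.ext
          (Dart.eq_of_edge_eq_of_head_eq h (d.2.trans d'.2.symm))))
        (fun d d' h => Subtype.ext (Subtype.ext
          (Dart.eq_of_edge_eq_of_tail_eq h (d.2.trans d'.2.symm)))) e
      exact ⟨φ, fun _ => hφ⟩
  choose φ hφ using hlocal
  refine ⟨fiberPerm φ, fun d => ?_, fun d hd => ?_⟩ <;> rw [fiberPerm_apply φ rfl]
  exacts [(φ d.1.head ⟨d, rfl⟩).2, hφ d.1.head hd ⟨d, rfl⟩]

namespace IsRouting

variable {s : V} {D : Set G.Dart} {π : Equiv.Perm D}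

/-- The walk along the first `n` darts of the orbit of `d`. -/
def excursion (hπ : IsRouting s π) (d : D) {n : ℕ} (hn : 0 < n) : G.Walk where
  len := n
  len_pos := hn
  verts i := (π^[i] d).1.tail
  edges i := (π^[i] d).1.edge
  valid i := by
    rw [Fin.val_castSucc, Fin.val_succ, iterate_succ_apply', hπ.tail_apply, Dart.ends_edge]

theorem isSCycle_excursion (hπ : IsRouting s π) {d : D} (hd : d.1.tail = s)
    (hpos : 0 < returnTime π {d | d.1.tail = s} d) : (hπ.excursion d hpos).IsSCycle s := by
  have havoid {j : ℕ} (h0 : 0 < j) (h : j < returnTime π {d | d.1.tail = s} d) :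
      (π^[j] d).1.tail ≠ s := iterate_notMem_of_lt_returnTime h0 h
  refine ⟨hd, iterate_returnTime_mem hpos, fun i h0 hlast => ?_, fun i j hij => ?_, fun e => ?_⟩
  · exact havoid (Nat.pos_of_ne_zero fun h => h0 (Fin.ext h))
      (lt_of_le_of_ne (Nat.le_of_lt_succ i.2) fun h => hlast (Fin.ext h))
  · change (π^[i] d).1.edge ≠ (π^[j] d).1.edge
    have hhead : (π^[i] d).1.head ≠ s := by
      rw [← hπ.tail_apply, ← iterate_succ_apply' π]
      exact havoid i.1.succ_pos (hij.trans_lt j.2)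
    rw [← hij, iterate_succ_apply' π]
    exact (hπ.edge_apply_ne _ hhead).symm
  · have := (Dart.finite_preimage_edge (G := G) e).to_subtype
    refine (Nat.card_le_card_of_injective (β := (Dart.edge ⁻¹' {e} : Set G.Dart))
      (fun i => ⟨(π^[i.1] d).1, i.2⟩) fun i j hij => ?_).trans (Dart.ncard_preimage_edge_le_two e)
    have hiter : π^[i.1] d = π^[j.1] d := Subtype.ext (congr_arg Subtype.val hij :)
    exact Subtype.ext (Fin.ext (eq_of_iterate_eq_of_lt_returnTime π.injective
      (Z := {d | d.1.tail = s}) hd hd i.1.2 j.1.2 hiter).2)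

theorem one_le_sum_excursion [Finite D] (hπ : IsRouting s π) {x : V → ℝ}
    (hx : G.IsSCycleCover s x) {d : D} (hd : d.1.tail = s) :
    1 ≤ ∑ i ∈ Finset.range (returnTime π {d | d.1.tail = s} d), x (π^[i] d).1.tail := by
  have hpos : 0 < returnTime π {d | d.1.tail = s} d :=
    returnTime_pos (π.injective.mem_periodicPts d) hd
  have hreturn : (π^[returnTime π {d | d.1.tail = s} d] d).1.tail = s :=
    iterate_returnTime_mem hpos
  have hcover := hx.2.2 _ (hπ.isSCycle_excursion hd hpos)
  have hsum := Fin.sum_univ_eq_sum_range (fun i => x (π^[i] d).1.tail)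
    (returnTime π {d | d.1.tail = s} d + 1)
  have hlast : x (π^[returnTime π {d | d.1.tail = s} d] d).1.tail = 0 := by
    rw [hreturn]
    exact hx.2.1
  rw [Finset.sum_range_succ, hlast, add_zero] at hsum
  exact hcover.trans_eq hsum

theorem card_tail_eq_le_sum [Fintype D] (hπ : IsRouting s π) {x : V → ℝ}
    (hx : G.IsSCycleCover s x) :
    (Nat.card {d : D // d.1.tail = s} : ℝ) ≤ ∑ d : D, x d.1.tail := by
  classical
  let Z : Finset D := {d | d.1.tail = s}
  have hZ : (Z : Set D) = {d | d.1.tail = s} := by simp [Z]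
  calc (Nat.card {d : D // d.1.tail = s} : ℝ)
    _ = ∑ _ ∈ Z, (1 : ℝ) := by simp [Z, Nat.card_eq_fintype_card, Fintype.card_subtype]
    _ ≤ ∑ d ∈ Z, ∑ i ∈ Finset.range (returnTime π Z d), x (π^[i] d).1.tail := by
      refine Finset.sum_le_sum fun d hd => ?_
      rw [hZ]
      exact hπ.one_le_sum_excursion hx (by simpa [Z] using hd)
    _ ≤ ∑ d : D, x d.1.tail :=
      sum_sum_range_returnTime_le π.injective Z (y := fun d => x d.1.tail) fun d => hx.1 _

end IsRouting

end Routing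

section Packing

/-- The spanning subgraph with edge set `F`. -/
def restrict (G : Multigraph V E) (F : Set E) : Multigraph V F := ⟨fun e => G.ends e⟩

variable {f : E → ℝ}

theorem degree_restrict_half (v : V) : (G.restrict {e | f e = 1 / 2}).degree v = G.cntH f v :=
  Nat.card_congr ((Equiv.subtypeSubtypeEquivSubtypeInter (f · = 1 / 2) (v ∈ G.ends ·)).trans
    (Equiv.subtypeEquivRight fun _ => and_comm))

/-- The darts along which a packing is routed: both darts of every edge of value `1`, and the dart
chosen by `o` of every edge of value `1 / 2`. -/
def packingDarts (f : E → ℝ) (o : (G.restrict {e | f e = 1 / 2}).Orientation) : Set G.Dart :=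
  {d | f d.edge = 1 ∨ ∃ e, e.1 = d.edge ∧ o.src e = d.tail ∧ o.tgt e = d.head}

variable (o : (G.restrict {e | f e = 1 / 2}).Orientation)

theorem rev_mem_packingDarts_iff {d : G.Dart} :
    d.rev ∈ packingDarts f o ↔ d ∈ packingDarts f o.reverse := by
  simp only [packingDarts, Set.mem_ofPred_eq, Dart.rev_edge, Dart.rev_tail, Dart.rev_head,
    Orientation.reverse_src, Orientation.reverse_tgt, and_comm]

theorem image_edge_packingDarts_tail_eq (v : V) :
    Dart.edge '' {d | d ∈ packingDarts f o ∧ d.tail = v} =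
      {e | v ∈ G.ends e ∧ f e = 1} ∪ Subtype.val '' {e | o.src e = v} := by
  ext e
  constructor
  · rintro ⟨d, ⟨h1 | ⟨e, he, hsrc, -⟩, rfl⟩, rfl⟩
    exacts [.inl ⟨d.tail_mem_ends, h1⟩, .inr ⟨e, hsrc, he⟩]
  · rintro (⟨hv, h1⟩ | ⟨e, rfl, rfl⟩)
    · obtain ⟨d, rfl, rfl⟩ := Dart.exists_of_mem_ends hv
      exact ⟨d, ⟨.inl h1, rfl⟩, rfl⟩
    · exact ⟨⟨e, o.src e, o.tgt e, o.ends_eq e⟩, ⟨.inr ⟨e, rfl, rfl, rfl⟩, rfl⟩, rfl⟩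

theorem card_packingDarts_tail_eq [Finite E] (v : V) :
    Nat.card {d : packingDarts f o // d.1.tail = v} =
      G.cnt1 f v + Nat.card {e // o.src e = v} := by
  have hinj : Set.InjOn Dart.edge {d | d ∈ packingDarts f o ∧ d.tail = v} := fun d hd d' hd' h =>
    Dart.eq_of_edge_eq_of_tail_eq h (hd.2.trans hd'.2.symm)
  have hdisj : Disjoint {e | v ∈ G.ends e ∧ f e = 1} (Subtype.val '' {e | o.src e = v}) := by
    rw [Set.disjoint_left]
    rintro _ ⟨-, h1⟩ ⟨e, -, rfl⟩
    have := e.2.symm.trans h1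
    norm_num at this
  calc Nat.card {d : packingDarts f o // d.1.tail = v}
    _ = {d | d ∈ packingDarts f o ∧ d.tail = v}.ncard :=
      Nat.card_congr (Equiv.subtypeSubtypeEquivSubtypeInter (· ∈ packingDarts f o) (·.tail = v))
    _ = ({e | v ∈ G.ends e ∧ f e = 1} ∪ Subtype.val '' {e | o.src e = v}).ncard := by
      rw [← image_edge_packingDarts_tail_eq, hinj.ncard_image]
    _ = G.cnt1 f v + Nat.card {e // o.src e = v} := by
      rw [Set.ncard_union_eq hdisj, Set.ncard_image_of_injective _ Subtype.val_injective]
      rfl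

theorem card_packingDarts_head_eq [Finite E] (v : V) :
    Nat.card {d : packingDarts f o // d.1.head = v} =
      G.cnt1 f v + Nat.card {e // o.tgt e = v} :=
  (Nat.card_congr ((Dart.rev_involutive.toPerm.subtypeEquiv fun _ =>
    (rev_mem_packingDarts_iff o.reverse).symm).subtypeEquiv fun _ => .rfl)).trans
      (card_packingDarts_tail_eq o.reverse v)

variable {o}

theorem edge_eq_one_of_rev_mem {d : G.Dart} (hloop : ∀ e, f e = 1 / 2 → ¬ (G.ends e).IsDiag)
    (hd : d ∈ packingDarts f o) (hrev : d.rev ∈ packingDarts f o) : f d.edge = 1 := by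
  obtain h1 | ⟨e, he, hsrc, -⟩ := hd
  · exact h1
  obtain h1 | ⟨e', he', hsrc', -⟩ := hrev
  · exact h1
  obtain rfl : e = e' := Subtype.ext (he.trans he'.symm)
  refine absurd ?_ (hloop e e.2)
  rw [he, d.ends_edge, Sym2.mk_isDiag_iff]
  exact hsrc.symm.trans hsrc'

theorem basicSize_eq [Fintype E] {s : V} (hs : ∀ e, s ∈ G.ends e → f e = 0 ∨ f e = 1) :
    G.basicSize s f = G.cnt1 f s / 2 := by
  classical
  have hind (e : E) : Set.indicator {e | s ∈ G.ends e} f e =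
      if s ∈ G.ends e ∧ f e = 1 then 1 else 0 := by
    by_cases he : s ∈ G.ends e
    · obtain h | h := hs e he <;> simp [he, h]
    · simp [he]
  rw [basicSize, Finset.sum_congr rfl fun e _ => hind e, Finset.sum_boole, cnt1,
    Nat.card_eq_fintype_card, Fintype.card_subtype]
  ring

theorem cnt1_pos [Finite E] {v : V} {e : E} (hv : v ∈ G.ends e) (he : f e = 1) :
    0 < G.cnt1 f v :=
  Nat.card_pos_iff.2 ⟨⟨e, hv, he⟩, inferInstance⟩

theorem cntH_eq_zero {v : V} (hv : ∀ e, v ∈ G.ends e → f e ≠ 1 / 2) : G.cntH f v = 0 :=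
  Nat.card_eq_zero.2 (.inl ⟨fun e => hv e e.2.1 e.2.2⟩)

theorem IsTypeO.cnt1_eq_zero {v : V} (hv : G.IsTypeO f v) : G.cnt1 f v = 0 :=
  Nat.card_eq_zero.2 (.inl ⟨fun e => by simpa [hv e e.2.1] using e.2.2⟩)

theorem IsTypeO.cntH_eq_zero {v : V} (hv : G.IsTypeO f v) : G.cntH f v = 0 :=
  Multigraph.cntH_eq_zero fun e he => by norm_num [hv e he]

theorem cnt1_cntH_cases {v : V}
    (hv : G.IsTypeO f v ∨ G.IsTypeI f v ∨ G.IsTypeH f v ∨ G.IsTypeT f v) :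
    (G.cnt1 f v = 0 ∧ G.cntH f v = 0) ∨ (G.cnt1 f v = 2 ∧ G.cntH f v = 0) ∨
      (G.cnt1 f v = 0 ∧ G.cntH f v = 2) ∨ (G.cnt1 f v = 1 ∧ G.cntH f v = 2) :=
  hv.imp_left fun hO => ⟨hO.cnt1_eq_zero, hO.cntH_eq_zero⟩

theorem exists_isEulerian_restrict_half [Finite E] {s : V}
    (hloop : ∀ e, f e = 1 / 2 → ¬ (G.ends e).IsDiag)
    (hs : ∀ e, s ∈ G.ends e → f e = 0 ∨ f e = 1)
    (htype : ∀ v, v ≠ s → G.IsTypeO f v ∨ G.IsTypeI f v ∨ G.IsTypeH f v ∨ G.IsTypeT f v) :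
    ∃ o : (G.restrict {e | f e = 1 / 2}).Orientation, o.IsEulerian := by
  refine exists_isEulerian (fun e => hloop e e.2) fun v => ?_
  rw [degree_restrict_half]
  obtain rfl | hv := eq_or_ne v s
  · have hzero : G.cntH f v = 0 := cntH_eq_zero fun e he => by
      obtain h | h := hs e he <;> norm_num [h]
    rw [hzero]
    exact .zero
  · obtain ⟨-, h⟩ | ⟨-, h⟩ | ⟨-, h⟩ | ⟨-, h⟩ := cnt1_cntH_cases (htype v hv) <;>
      norm_num [h]

theorem exists_isRouting_packingDarts [Finite E] {s : V}
    (hloop : ∀ e, f e = 1 / 2 → ¬ (G.ends e).IsDiag)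
    (htype : ∀ v, v ≠ s → G.IsTypeO f v ∨ G.IsTypeI f v ∨ G.IsTypeH f v ∨ G.IsTypeT f v)
    (ho : o.IsEulerian) : ∃ π : Equiv.Perm (packingDarts f o), IsRouting s π := by
  refine exists_isRouting (fun v => ?_) fun d hd hrev hhead => ?_
  · have hbalanced := ho v
    rw [card_packingDarts_head_eq, card_packingDarts_tail_eq]
    omega
  · have hone : f d.edge = 1 := edge_eq_one_of_rev_mem hloop hd hrev
    have hpos : 0 < G.cnt1 f d.head := cnt1_pos d.rev.tail_mem_ends hone
    have htgt := (ho d.head).2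
    have hcases := cnt1_cntH_cases (htype d.head hhead)
    rw [degree_restrict_half] at htgt
    rw [card_packingDarts_head_eq]
    omega

theorem card_packingDarts_tail_le_two [Finite E] {v : V} (ho : o.IsEulerian)
    (hv : G.IsTypeO f v ∨ G.IsTypeI f v ∨ G.IsTypeH f v ∨ G.IsTypeT f v) :
    Nat.card {d : packingDarts f o // d.1.tail = v} ≤ 2 := by
  have hsrc := (ho v).1
  have hcases := cnt1_cntH_cases hv
  rw [degree_restrict_half] at hsrc
  rw [card_packingDarts_tail_eq]
  omega

end Packing

end Multigraph

theorem stmt11_basic_le_cover_general {V E : Type} [Fintype V] [Fintype E] (G : Multigraph V E)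
    (s : V) (f : E → ℝ) (hloop : ∀ e, f e = 1 / 2 → ¬ (G.ends e).IsDiag)
    (hs : ∀ e, s ∈ G.ends e → f e = 0 ∨ f e = 1)
    (htype : ∀ v, v ≠ s → G.IsTypeO f v ∨ G.IsTypeI f v ∨ G.IsTypeH f v ∨ G.IsTypeT f v)
    (x : V → ℝ) (hx : G.IsSCycleCover s x) : G.basicSize s f ≤ ∑ v, x v := by
  obtain ⟨o, ho⟩ := Multigraph.exists_isEulerian_restrict_half hloop hs htype
  obtain ⟨π, hπ⟩ := Multigraph.exists_isRouting_packingDarts hloop htype ho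
  let _ := Fintype.ofFinite (Multigraph.packingDarts f o)
  have hcover : (G.cnt1 f s : ℝ) ≤ 2 * ∑ v, x v := calc
    (G.cnt1 f s : ℝ) ≤ Nat.card {d : Multigraph.packingDarts f o // d.1.tail = s} := by
      exact_mod_cast (Multigraph.card_packingDarts_tail_eq o s).ge.trans' (Nat.le_add_right _ _)
    _ ≤ ∑ d : Multigraph.packingDarts f o, x d.1.tail := hπ.card_tail_eq_le_sum hx
    _ ≤ 2 * ∑ v, x v := sum_comp_le_mul_sum (k := 2) hx.1 fun v hv =>
      Multigraph.card_packingDarts_tail_le_two ho (htype v fun h => hv (h ▸ hx.2.1))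
  rw [Multigraph.basicSize_eq hs]
  linarith

/-- the size of every basic `s`-cycle packing is at most the
size of every `s`-cycle cover. -/
theorem stmt11_basic_le_cover {V E : Type} [Fintype V] [Fintype E] (G : Multigraph V E)
    (hloop : G.LoopFree) (s : V) (f : E → ℝ) (hf : G.IsBasicSCyclePacking s f)
    (x : V → ℝ) (hx : G.IsSCycleCover s x) :
    G.basicSize s f ≤ ∑ v, x v :=
  stmt11_basic_le_cover_general G s f (fun e _ => hloop e) hf.2.1 hf.2.2.1 x hx
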